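/- For integers n, j, k, l ≥ 0 with n + j = k + l + 1, the identity D′_{njkl} = 0 holds, where D′_{njkl} = (n+1)·S̃_{n−1,jkl} + (j+1)·S̃_{n,j−1,kl} − (k+1)·S̃_{n,j,k+1,l} − (l+1)·S̃_{n,j,k,l+1}. -/

import Mathlib

open Set MeasureTheory

/-- The generalized Laguerre polynomial `L_n^{(1)}` (with parameter 1). -/
noncomputable def Lag (n : ℕ) (x : ℝ) : ℝ :=
  ∑ k ∈ Finset.range (n + 1),
    (-1 : ℝ)^k * ((n + 1).choose (n - k) : ℝ) * x^k / (Nat.factorial k : ℝ)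

/-- The normalized radial eigenfunctions of `-Δ + r²` in dimension `d = 4`:
`e_n(r) = √(2/(n+1)) L_n^{(1)}(r²) e^{-r²/2}`. -/
noncomputable def efun (n : ℕ) (r : ℝ) : ℝ :=
  Real.sqrt (2 / (n + 1)) * Lag n (r^2) * Real.exp (-r^2 / 2)

/-- The interaction coefficients of the four-dimensional Schrödinger–Newton–Hooke
resonant system. -/
noncomputable def Scoef (n j k l : ℕ) : ℝ :=
  ∫ r in Ioi (0:ℝ), ∫ s in Ioi (0:ℝ),
    efun n r * efun j s * efun k s * efun l r / (max r s)^2 * r^3 * s^3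

/-- `S̃_{njkl} = √((n+1)(j+1)(k+1)(l+1)) S_{njkl}`, with the convention that it
vanishes whenever any index is negative. -/
noncomputable def Stilde (n j k l : ℤ) : ℝ :=
  if 0 ≤ n ∧ 0 ≤ j ∧ 0 ≤ k ∧ 0 ≤ l then
    Real.sqrt (((n:ℝ) + 1) * ((j:ℝ) + 1) * ((k:ℝ) + 1) * ((l:ℝ) + 1)) *
      Scoef n.toNat j.toNat k.toNat l.toNat
  else 0

/-!
In the variables `x = r²`, `y = s²` the four-dimensional kernel becomes `min{x,y}`, so
`S̃_{njkl} = B(L_n L_l, L_j L_k)` for the bilinear form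
`B(p, q) = ∫∫ p(x) q(y) e^{-x-y} min{x,y} dx dy = ∫ P(t) Q(t) e^{-2t} dt`, where
`P e^{-t} = ∫_t^∞ p e^{-x} dx` and likewise for `Q`. The degree-one homogeneity of `min{x,y}` gives
Euler's identity `B(E_c p, q) + B(p, E_d q) = (c + d + 3) B(p, q)`, where `E_c` is `c - x d/dx`
conjugated by `e^{-x}`. Lowering `L_n` minus raising `L_l` in the product `L_n L_l` amounts to
applying `E_{n-l-2}` to it, and in the same way for `L_j L_k` with `E_{j-k-2}`; hence `D′_{njkl}` is
`(n + j - k - l - 1) S̃_{njkl}`, which vanishes on resonance.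
-/

open Polynomial Filter Topology

section LayerCake

variable {f g : ℝ → ℝ}

theorem aestronglyMeasurable_of_integrableOn_id_mul
    (hf : IntegrableOn (fun x => x * f x) (Ioi 0)) :
    AEStronglyMeasurable f (volume.restrict (Ioi 0)) := by
  refine (measurable_inv.aestronglyMeasurable.mul hf.aestronglyMeasurable).congr ?_
  filter_upwards [ae_restrict_mem measurableSet_Ioi] with x hx
  exact inv_mul_cancel_left₀ (ne_of_gt hx) (f x)

theorem integrable_mul_mul_min (hf : IntegrableOn (fun x => x * f x) (Ioi 0))
    (hg : IntegrableOn g (Ioi 0)) :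
    Integrable (fun z : ℝ × ℝ => f z.1 * g z.2 * min z.1 z.2)
      ((volume.restrict (Ioi 0)).prod (volume.restrict (Ioi 0))) := by
  have hmeas := (aestronglyMeasurable_of_integrableOn_id_mul hf).comp_fst.mul
    (hg.aestronglyMeasurable.comp_snd (μ := volume.restrict (Ioi 0)))
  refine (hf.mul_prod hg).mono (hmeas.mul (by fun_prop)) ?_
  rw [Measure.prod_restrict]
  filter_upwards [ae_restrict_mem (measurableSet_Ioi.prod measurableSet_Ioi)] with z hz
  obtain ⟨hx, hy⟩ : 0 < z.1 ∧ 0 < z.2 := hz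
  calc ‖f z.1 * g z.2 * min z.1 z.2‖ = ‖f z.1 * g z.2‖ * min z.1 z.2 := by
        rw [norm_mul, Real.norm_of_nonneg (le_min hx.le hy.le)]
    _ ≤ ‖f z.1 * g z.2‖ * z.1 := by gcongr; exact min_le_left _ _
    _ = ‖z.1 * f z.1 * g z.2‖ := by
        rw [mul_assoc z.1, norm_mul z.1, Real.norm_of_nonneg hx.le, mul_comm]

theorem integral_Ioi_indicator_Iio_const {m : ℝ} (hm : 0 ≤ m) (c : ℝ) :
    ∫ t in Ioi (0 : ℝ), (Iio m).indicator (fun _ => c) t = c * m := by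
  rw [setIntegral_indicator measurableSet_Iio, Ioi_inter_Iio, setIntegral_const,
    Real.volume_real_Ioo_of_le hm, sub_zero, smul_eq_mul, mul_comm]

theorem indicator_Ioi_mul_indicator_Ioi (f g : ℝ → ℝ) (x y t : ℝ) :
    (Ioi t).indicator f x * (Ioi t).indicator g y
      = (Iio (min x y)).indicator (fun _ => f x * g y) t := by
  by_cases hx : t < x <;> by_cases hy : t < y <;> simp [hx, hy]

theorem integrable_indicator_Ioi_mul_indicator_Ioi
    (hf : IntegrableOn (fun x => x * f x) (Ioi 0)) (hg : IntegrableOn g (Ioi 0)) :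
    Integrable
      (fun w : (ℝ × ℝ) × ℝ => (Ioi w.2).indicator f w.1.1 * (Ioi w.2).indicator g w.1.2)
      (((volume.restrict (Ioi 0)).prod (volume.restrict (Ioi 0))).prod
        (volume.restrict (Ioi 0))) := by
  have hmeas := ((aestronglyMeasurable_of_integrableOn_id_mul hf).comp_fst.mul
    (hg.aestronglyMeasurable.comp_snd (μ := volume.restrict (Ioi 0)))).comp_fst
    (ν := volume.restrict (Ioi (0 : ℝ)))
  have hset : MeasurableSet {w : (ℝ × ℝ) × ℝ | w.2 < min w.1.1 w.1.2} :=
    measurableSet_lt (by fun_prop) (by fun_prop)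
  simp only [indicator_Ioi_mul_indicator_Ioi]
  refine (integrable_prod_iff (hmeas.indicator hset)).2 ⟨.of_forall fun z => ?_, ?_⟩
  · have hfin : volume.restrict (Ioi 0) (Iio (min z.1 z.2)) ≠ ⊤ := by
      simp [Measure.restrict_apply measurableSet_Iio, Iio_inter_Ioi]
    exact (integrableOn_const (C := f z.1 * g z.2) hfin).integrable_indicator measurableSet_Iio
  · refine (integrable_mul_mul_min hf hg).norm.congr ?_
    rw [Measure.prod_restrict]
    filter_upwards [ae_restrict_mem (measurableSet_Ioi.prod measurableSet_Ioi)] with z hz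
    have hmin : 0 ≤ min z.1 z.2 := le_min (le_of_lt hz.1) (le_of_lt hz.2)
    rw [norm_mul, Real.norm_of_nonneg hmin, ← integral_Ioi_indicator_Iio_const hmin]
    congr 1 with t
    exact (norm_indicator_eq_indicator_norm (s := Iio (min z.1 z.2))
      (fun _ => f z.1 * g z.2) t).symm

theorem integral_integral_mul_min (hf : IntegrableOn (fun x => x * f x) (Ioi 0))
    (hg : IntegrableOn g (Ioi 0)) :
    ∫ x in Ioi 0, ∫ y in Ioi 0, f x * g y * min x y
      = ∫ t in Ioi 0, (∫ x in Ioi t, f x) * ∫ y in Ioi t, g y := by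
  set μ : Measure ℝ := volume.restrict (Ioi 0)
  have hlayers : ∀ᵐ z ∂μ.prod μ, f z.1 * g z.2 * min z.1 z.2
      = ∫ t, (Ioi t).indicator f z.1 * (Ioi t).indicator g z.2 ∂μ := by
    rw [Measure.prod_restrict]
    filter_upwards [ae_restrict_mem (measurableSet_Ioi.prod measurableSet_Ioi)] with z hz
    simp only [indicator_Ioi_mul_indicator_Ioi]
    rw [integral_Ioi_indicator_Iio_const (le_min (le_of_lt hz.1) (le_of_lt hz.2))]
  have htail {t : ℝ} (ht : t ∈ Ioi 0) (u : ℝ → ℝ) :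
      ∫ x, (Ioi t).indicator u x ∂μ = ∫ x in Ioi t, u x := by
    rw [setIntegral_indicator measurableSet_Ioi, Ioi_inter_Ioi, sup_of_le_right (le_of_lt ht)]
  calc ∫ x, ∫ y, f x * g y * min x y ∂μ ∂μ
      = ∫ z, f z.1 * g z.2 * min z.1 z.2 ∂μ.prod μ :=
        (integral_prod _ (integrable_mul_mul_min hf hg)).symm
    _ = ∫ z, ∫ t, (Ioi t).indicator f z.1 * (Ioi t).indicator g z.2 ∂μ ∂μ.prod μ :=
        integral_congr_ae hlayers
    _ = ∫ t, ∫ z, (Ioi t).indicator f z.1 * (Ioi t).indicator g z.2 ∂μ.prod μ ∂μ :=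
        integral_integral_swap (integrable_indicator_Ioi_mul_indicator_Ioi hf hg)
    _ = ∫ t, (∫ x, (Ioi t).indicator f x ∂μ) * ∫ y, (Ioi t).indicator g y ∂μ ∂μ := by
        simp only [integral_prod_mul]
    _ = ∫ t in Ioi 0, (∫ x in Ioi t, f x) * ∫ y in Ioi t, g y :=
        setIntegral_congr_fun measurableSet_Ioi fun t ht => by simp only [htail ht]

end LayerCake

section SquareSubstitution

theorem integral_Ioi_comp_sq_mul_self (φ : ℝ → ℝ) :
    ∫ r in Ioi (0 : ℝ), φ (r ^ 2) * r = (∫ x in Ioi (0 : ℝ), φ x) / 2 := by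
  rw [← integral_comp_rpow_Ioi_of_pos (g := φ) two_pos, ← integral_div]
  refine setIntegral_congr_fun measurableSet_Ioi fun r _ => ?_
  rw [show (2 : ℝ) - 1 = 1 by norm_num, Real.rpow_one, Real.rpow_two, smul_eq_mul]
  ring

theorem integral_integral_Ioi_comp_sq_mul_self (Φ : ℝ → ℝ → ℝ) :
    ∫ r in Ioi (0 : ℝ), ∫ s in Ioi (0 : ℝ), Φ (r ^ 2) (s ^ 2) * (r * s)
      = (∫ x in Ioi (0 : ℝ), ∫ y in Ioi (0 : ℝ), Φ x y) / 4 := by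
  have inner (r : ℝ) : ∫ s in Ioi (0 : ℝ), Φ (r ^ 2) (s ^ 2) * (r * s)
      = (∫ y in Ioi (0 : ℝ), Φ (r ^ 2) y) / 2 * r := by
    rw [← integral_Ioi_comp_sq_mul_self, ← integral_mul_const]
    exact integral_congr_ae (.of_forall fun _ => by ring)
  simp only [inner]
  rw [integral_Ioi_comp_sq_mul_self fun x => (∫ y in Ioi (0 : ℝ), Φ x y) / 2, integral_div]
  ring

end SquareSubstitution

section Laplace

variable {a : ℝ}

theorem tendsto_eval_mul_exp_neg_mul_atTop (ha : 0 < a) (p : ℝ[X]) :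
    Tendsto (fun x => p.eval x * Real.exp (-(a * x))) atTop (𝓝 0) := by
  have h := (p.comp (C a⁻¹ * X)).tendsto_div_exp_atTop.comp (tendsto_id.const_mul_atTop ha)
  refine h.congr fun x => ?_
  simp [Real.exp_neg, div_eq_mul_inv, ha.ne']

theorem integrableOn_Ioi_eval_mul_exp_neg_mul (ha : 0 < a) (p : ℝ[X]) (t : ℝ) :
    IntegrableOn (fun x => p.eval x * Real.exp (-(a * x))) (Ioi t) := by
  refine integrable_of_isBigO_exp_neg (half_pos ha)
    (p.continuous.continuousOn.mul (by fun_prop)) ?_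
  have h := ((tendsto_eval_mul_exp_neg_mul_atTop (half_pos ha) p).isBigO_one ℝ).mul
    (Asymptotics.isBigO_refl (fun x => Real.exp (-(a / 2) * x)) atTop)
  refine h.congr (fun x => ?_) fun x => one_mul _
  rw [mul_assoc, ← Real.exp_add]
  ring_nf

theorem integral_Ioi_smul_sub_derivative_mul_exp (ha : 0 < a) (p : ℝ[X]) (t : ℝ) :
    ∫ x in Ioi t, (a • p - derivative p).eval x * Real.exp (-(a * x))
      = p.eval t * Real.exp (-(a * t)) := by
  have hderiv (x : ℝ) : HasDerivAt (fun x => -(p.eval x * Real.exp (-(a * x))))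
      ((a • p - derivative p).eval x * Real.exp (-(a * x))) x := by
    refine ((p.hasDerivAt x).mul ((hasDerivAt_id x).const_mul a).neg.exp).neg.congr_deriv ?_
    simp only [id_eq, Pi.neg_apply, mul_one, mul_neg, neg_add_rev, neg_neg, eval_sub, eval_smul,
      smul_eq_mul]
    ring
  have h := integral_Ioi_of_hasDerivAt_of_tendsto' (fun x (_ : x ∈ Ici t) => hderiv x)
    (integrableOn_Ioi_eval_mul_exp_neg_mul ha _ t) (tendsto_eval_mul_exp_neg_mul_atTop ha p).neg
  simpa using h

/-- The Laplace transform `p ↦ ∫₀^∞ p(x) e^{-ax} dx` at a fixed `a > 0`, as a linear functional on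
polynomials. -/
noncomputable def laplace (ha : 0 < a) : ℝ[X] →ₗ[ℝ] ℝ where
  toFun p := ∫ x in Ioi 0, p.eval x * Real.exp (-(a * x))
  map_add' p q := by
    simp only [eval_add, add_mul]
    exact integral_add (integrableOn_Ioi_eval_mul_exp_neg_mul ha p 0)
      (integrableOn_Ioi_eval_mul_exp_neg_mul ha q 0)
  map_smul' c p := by
    simp only [eval_smul, smul_eq_mul, mul_assoc, integral_const_mul, RingHom.id_apply]

theorem laplace_apply (ha : 0 < a) (p : ℝ[X]) :
    laplace ha p = ∫ x in Ioi 0, p.eval x * Real.exp (-(a * x)) := rfl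

theorem laplace_derivative (ha : 0 < a) (p : ℝ[X]) :
    laplace ha (derivative p) = a * laplace ha p - p.eval 0 := by
  have h : laplace ha (a • p - derivative p) = p.eval 0 := by
    rw [laplace_apply, integral_Ioi_smul_sub_derivative_mul_exp ha]
    simp
  rw [map_sub, map_smul, smul_eq_mul] at h
  linarith

end Laplace

section SumIDeriv

variable {R : Type*} [Ring R]

theorem sub_derivative_sumIDeriv (p : R[X]) : sumIDeriv p - derivative (sumIDeriv p) = p :=
  sub_eq_of_eq_add (sumIDeriv_eq_self_add p)

theorem sumIDeriv_sub_derivative (p : R[X]) : sumIDeriv (p - derivative p) = p := by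
  rw [map_sub, sumIDeriv_derivative, sub_derivative_sumIDeriv]

end SumIDeriv

section ExpEuler

variable {R : Type*} [CommRing R]

/-- The operator `c - x d/dx` conjugated by `e^{-x}`, that is,
`e^{-x} (expEuler c p) = (c - x d/dx) (e^{-x} p)`. -/
noncomputable def expEuler (c : R) (p : R[X]) : R[X] :=
  c • p + X * p - X * derivative p

theorem expEuler_sub_derivative (c : R) (p : R[X]) :
    expEuler c (p - derivative p) = expEuler (c + 1) p - derivative (expEuler (c + 1) p) := by
  simp only [expEuler, derivative_add, derivative_sub, derivative_mul, derivative_smul,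
    derivative_X, add_smul, one_smul, smul_sub]
  ring

theorem sumIDeriv_expEuler (c : R) (p : R[X]) :
    sumIDeriv (expEuler c p) = expEuler (c + 1) (sumIDeriv p) := by
  rw [← sumIDeriv_sub_derivative (expEuler (c + 1) (sumIDeriv p)), ← expEuler_sub_derivative,
    sub_derivative_sumIDeriv]

theorem expEuler_mul_add_mul_expEuler (c d : R) (p q : R[X]) :
    expEuler c p * q + p * expEuler d q
      = (c + d + 1) • (p * q) + (2 : R) • (X * (p * q)) - derivative (X * (p * q)) := by
  simp only [expEuler, derivative_mul, derivative_X, smul_eq_C_mul, C_add, C_1, C_ofNat]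
  ring

end ExpEuler

section MinPairing

/-- The bilinear form `(p, q) ↦ ∫₀^∞ ∫₀^∞ p(x) q(y) e^{-x-y} min{x,y} dx dy` on polynomials. The
definition is its layer-cake form `∫₀^∞ (∫_t^∞ p e^{-x} dx) (∫_t^∞ q e^{-y} dy) dt`, in which
`∫_t^∞ p e^{-x} dx = (sumIDeriv p)(t) e^{-t}`. -/
noncomputable def minPairing : ℝ[X] →ₗ[ℝ] ℝ[X] →ₗ[ℝ] ℝ :=
  ((LinearMap.mul ℝ ℝ[X]).compl₁₂ sumIDeriv sumIDeriv).compr₂ (laplace two_pos)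

theorem minPairing_apply (p q : ℝ[X]) :
    minPairing p q = laplace two_pos (sumIDeriv p * sumIDeriv q) := rfl

theorem integral_Ioi_eval_mul_exp_neg (p : ℝ[X]) (t : ℝ) :
    ∫ x in Ioi t, p.eval x * Real.exp (-x) = (sumIDeriv p).eval t * Real.exp (-t) := by
  simpa [sub_derivative_sumIDeriv] using
    integral_Ioi_smul_sub_derivative_mul_exp one_pos (sumIDeriv p) t

theorem minPairing_eq_integral_integral (p q : ℝ[X]) :
    minPairing p q = ∫ x in Ioi 0, ∫ y in Ioi 0,
      (p.eval x * Real.exp (-x)) * (q.eval y * Real.exp (-y)) * min x y := by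
  have hp : IntegrableOn (fun x => x * (p.eval x * Real.exp (-x))) (Ioi 0) := by
    refine (integrableOn_Ioi_eval_mul_exp_neg_mul one_pos (X * p) 0).congr_fun (fun x _ => ?_)
      measurableSet_Ioi
    simp [mul_assoc]
  have hq : IntegrableOn (fun y => q.eval y * Real.exp (-y)) (Ioi 0) := by
    simpa using integrableOn_Ioi_eval_mul_exp_neg_mul one_pos q 0
  rw [integral_integral_mul_min hp hq, minPairing_apply, laplace_apply]
  simp only [integral_Ioi_eval_mul_exp_neg, eval_mul, two_mul, neg_add, Real.exp_add]
  exact setIntegral_congr_fun measurableSet_Ioi fun _ _ => by ring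

theorem minPairing_expEuler_add (c d : ℝ) (p q : ℝ[X]) :
    minPairing (expEuler c p) q + minPairing p (expEuler d q) = (c + d + 3) * minPairing p q := by
  simp only [minPairing_apply, sumIDeriv_expEuler, ← map_add]
  rw [expEuler_mul_add_mul_expEuler, map_sub, map_add, map_smul, map_smul, laplace_derivative,
    eval_mul, eval_X, zero_mul, smul_eq_mul, smul_eq_mul]
  ring

end MinPairing

section Laguerre

section Choose

variable {R : Type*} [Ring R]

theorem cast_choose_mul_succ (N m : ℕ) :
    (N.choose m : R) * (N + 1) = ((N + 1).choose m : R) * (N + 1 - m) := by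
  rcases le_or_gt m (N + 1) with hm | hm
  · simpa [Nat.cast_sub hm] using congrArg (Nat.cast (R := R)) (Nat.choose_mul_succ_eq N m)
  · simp [Nat.choose_eq_zero_of_lt hm, Nat.choose_eq_zero_of_lt (Nat.lt_of_succ_lt hm)]

theorem cast_choose_succ_mul (N m : ℕ) :
    (N.choose (m + 1) : R) * (m + 1) = (N.choose m : R) * (N - m) := by
  rcases le_or_gt m N with hm | hm
  · simpa [Nat.cast_sub hm] using congrArg (Nat.cast (R := R)) (Nat.choose_succ_right_eq N m)
  · simp [Nat.choose_eq_zero_of_lt hm, Nat.choose_eq_zero_of_lt (Nat.lt_succ_of_lt hm)]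

end Choose

variable (K : Type*) [Field K]

/-- The generalized Laguerre polynomial `L_n^{(α)}` for an integral parameter `α`. -/
noncomputable def laguerre (α n : ℕ) : K[X] :=
  ∑ k ∈ Finset.range (n + 1),
    C ((-1) ^ k * ((n + α).choose (n - k) : K) / (k.factorial : K)) * X ^ k

theorem coeff_laguerre (α n k : ℕ) :
    (laguerre K α n).coeff k = (-1) ^ k * ((n + α).choose (k + α) : K) / (k.factorial : K) := by
  simp only [laguerre, finsetSum_coeff, coeff_C_mul_X_pow, Finset.sum_ite_eq, Finset.mem_range]
  split_ifs with hk
  · rw [Nat.choose_symm_of_eq_add (show n + α = n - k + (k + α) by omega)]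
  · simp [Nat.choose_eq_zero_of_lt (show n + α < k + α by omega)]

theorem laguerre_zero (α : ℕ) : laguerre K α 0 = 1 := by
  simp [laguerre]

theorem coeff_X_mul_derivative {R : Type*} [Semiring R] (p : R[X]) (k : ℕ) :
    (X * derivative p).coeff k = p.coeff k * k := by
  cases k <;> simp [coeff_derivative]

theorem laguerre_lowering (α n : ℕ) :
    (n + 1 : K) • laguerre K α (n + 1) - X * derivative (laguerre K α (n + 1))
      = (n + 1 + α : K) • laguerre K α n := by
  ext k
  have h := cast_choose_mul_succ (R := K) (n + α) (k + α)
  rw [show n + α + 1 = n + 1 + α by ring] at h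
  simp only [coeff_smul, coeff_sub, coeff_X_mul_derivative, coeff_laguerre, smul_eq_mul]
  push_cast at h
  linear_combination (-(-1) ^ k / (k.factorial : K)) * h

theorem laguerre_raising [CharZero K] (α n : ℕ) :
    (n + 1 : K) • laguerre K α (n + 1)
      = (n + 1 + α : K) • laguerre K α n - X * laguerre K α n
        + X * derivative (laguerre K α n) := by
  ext k
  simp only [coeff_smul, coeff_sub, coeff_add, coeff_X_mul_derivative, smul_eq_mul]
  cases k with
  | zero =>
    have h := cast_choose_mul_succ (R := K) (n + α) α
    rw [show n + α + 1 = n + 1 + α by ring] at h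
    push_cast at h
    simp only [coeff_laguerre, pow_zero, zero_add, one_mul, Nat.factorial_zero, Nat.cast_one,
      div_one, mul_coeff_zero, coeff_X_zero, zero_mul, sub_zero, CharP.cast_eq_zero, mul_zero,
      add_zero]
    linear_combination -h
  | succ m =>
    have hpascal : ((n + 1 + α).choose (m + 1 + α) : K)
        = (n + α).choose (m + α) + (n + α).choose (m + 1 + α) := by
      rw [show n + 1 + α = n + α + 1 by ring, show m + 1 + α = m + α + 1 by ring,
        Nat.choose_succ_succ', Nat.cast_add]
    have hratio := cast_choose_succ_mul (R := K) (n + α) (m + α)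
    rw [show m + α + 1 = m + 1 + α by ring] at hratio
    have hfact : (m.factorial : K) ≠ 0 := by exact_mod_cast m.factorial_ne_zero
    have hm : (m + 1 : K) ≠ 0 := m.cast_add_one_ne_zero
    simp only [coeff_X_mul, coeff_laguerre, hpascal, Nat.factorial_succ]
    push_cast at hratio ⊢
    field_simp
    linear_combination (-1) ^ m * hratio

theorem laguerre_lowering_mul_sub_mul_raising [CharZero K] (α n l : ℕ) :
    ((n : K) • laguerre K α n - X * derivative (laguerre K α n)) * laguerre K α l
        - (l + 1 : K) • (laguerre K α n * laguerre K α (l + 1))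
      = expEuler (n - l - 1 - α : K) (laguerre K α n * laguerre K α l) := by
  rw [← mul_smul_comm, laguerre_raising]
  simp only [expEuler, derivative_mul, smul_eq_C_mul, C_add, C_sub, C_1]
  ring

end Laguerre

section Interaction

theorem eval_laguerre_one (n : ℕ) (x : ℝ) : (laguerre ℝ 1 n).eval x = Lag n x := by
  simp only [laguerre, Lag, eval_finsetSum, eval_mul, eval_C, eval_pow, eval_X, div_mul_eq_mul_div]

theorem sqrt_succ_mul_efun (n : ℕ) (r : ℝ) :
    √((n : ℝ) + 1) * efun n r
      = √2 * ((laguerre ℝ 1 n).eval (r ^ 2) * Real.exp (-r ^ 2 / 2)) := by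
  have hsqrt : √((n : ℝ) + 1) * √(2 / (n + 1)) = √2 := by
    rw [← Real.sqrt_mul (by positivity), mul_div_cancel₀ _ (by positivity)]
  rw [efun, eval_laguerre_one, mul_assoc √(2 / _), ← mul_assoc, hsqrt]

theorem pow_three_mul_pow_three_div_max_sq {r s : ℝ} (hr : 0 < r) (hs : 0 < s) :
    r ^ 3 * s ^ 3 / max r s ^ 2 = min (r ^ 2) (s ^ 2) * (r * s) := by
  rcases le_total r s with h | h
  · rw [max_eq_right h, min_eq_left (by gcongr)]
    field_simp
  · rw [max_eq_left h, min_eq_right (by gcongr)]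
    field_simp

theorem sqrt_mul_Scoef_integrand (n j k l : ℕ) {r s : ℝ} (hr : 0 < r) (hs : 0 < s) :
    √((n + 1) * (j + 1) * (k + 1) * (l + 1))
        * (efun n r * efun j s * efun k s * efun l r / max r s ^ 2 * r ^ 3 * s ^ 3)
      = 4 * (((laguerre ℝ 1 n * laguerre ℝ 1 l).eval (r ^ 2) * Real.exp (-r ^ 2)
        * ((laguerre ℝ 1 j * laguerre ℝ 1 k).eval (s ^ 2) * Real.exp (-s ^ 2))
        * min (r ^ 2) (s ^ 2)) * (r * s)) := by
  have hexp (x : ℝ) : Real.exp (-x ^ 2) = Real.exp (-x ^ 2 / 2) * Real.exp (-x ^ 2 / 2) := by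
    rw [← Real.exp_add, add_halves]
  have hfour : √2 * √2 * (√2 * √2) = (4 : ℝ) := by norm_num
  rw [Real.sqrt_mul (by positivity), Real.sqrt_mul (by positivity), Real.sqrt_mul (by positivity)]
  calc _ = (√(n + 1) * efun n r) * (√(j + 1) * efun j s) * (√(k + 1) * efun k s)
        * (√(l + 1) * efun l r) * (r ^ 3 * s ^ 3 / max r s ^ 2) := by ring
    _ = _ := by
      simp only [sqrt_succ_mul_efun, pow_three_mul_pow_three_div_max_sq hr hs, ← hfour, eval_mul,
        hexp]
      ring

theorem Stilde_natCast (n j k l : ℕ) :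
    Stilde n j k l
      = minPairing (laguerre ℝ 1 n * laguerre ℝ 1 l) (laguerre ℝ 1 j * laguerre ℝ 1 k) := by
  have hsubst := integral_integral_Ioi_comp_sq_mul_self fun x y =>
    (laguerre ℝ 1 n * laguerre ℝ 1 l).eval x * Real.exp (-x)
      * ((laguerre ℝ 1 j * laguerre ℝ 1 k).eval y * Real.exp (-y)) * min x y
  rw [← minPairing_eq_integral_integral, eq_div_iff four_ne_zero, mul_comm,
    ← integral_const_mul] at hsubst
  rw [Stilde, if_pos (by simp), ← hsubst, Scoef, ← integral_const_mul]
  refine setIntegral_congr_fun measurableSet_Ioi fun r hr => ?_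
  rw [← integral_const_mul, ← integral_const_mul]
  exact setIntegral_congr_fun measurableSet_Ioi fun s hs => sqrt_mul_Scoef_integrand n j k l hr hs

theorem succ_mul_Stilde_pred_left (n j k l : ℕ) :
    (n + 1 : ℝ) * Stilde ((n : ℤ) - 1) j k l
      = minPairing
          (((n : ℝ) • laguerre ℝ 1 n - X * derivative (laguerre ℝ 1 n)) * laguerre ℝ 1 l)
          (laguerre ℝ 1 j * laguerre ℝ 1 k) := by
  cases n with
  | zero => simp [Stilde, laguerre_zero]
  | succ n =>
    push_cast
    rw [add_sub_cancel_right, Stilde_natCast, laguerre_lowering, smul_mul_assoc, map_smul,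
      LinearMap.smul_apply, smul_eq_mul, Nat.cast_one]

theorem succ_mul_Stilde_pred_right (n j k l : ℕ) :
    (j + 1 : ℝ) * Stilde n ((j : ℤ) - 1) k l
      = minPairing (laguerre ℝ 1 n * laguerre ℝ 1 l)
          (((j : ℝ) • laguerre ℝ 1 j - X * derivative (laguerre ℝ 1 j)) * laguerre ℝ 1 k) := by
  cases j with
  | zero => simp [Stilde, laguerre_zero]
  | succ j =>
    push_cast
    rw [add_sub_cancel_right, Stilde_natCast, laguerre_lowering, smul_mul_assoc, map_smul,
      smul_eq_mul, Nat.cast_one]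

end Interaction

theorem stmt10_general (n j k l : ℕ) :
    ((n : ℝ) + 1) * Stilde ((n : ℤ) - 1) j k l + ((j : ℝ) + 1) * Stilde n ((j : ℤ) - 1) k l
        - ((k : ℝ) + 1) * Stilde n j ((k : ℤ) + 1) l - ((l : ℝ) + 1) * Stilde n j k ((l : ℤ) + 1)
      = ((n : ℝ) + j - k - l - 1) * Stilde n j k l := by
  have heuler := minPairing_expEuler_add (n - l - 1 - (1 : ℕ)) (j - k - 1 - (1 : ℕ))
    (laguerre ℝ 1 n * laguerre ℝ 1 l) (laguerre ℝ 1 j * laguerre ℝ 1 k)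
  rw [← laguerre_lowering_mul_sub_mul_raising, ← laguerre_lowering_mul_sub_mul_raising, map_sub,
    map_sub, map_smul, map_smul, LinearMap.sub_apply, LinearMap.smul_apply, smul_eq_mul,
    smul_eq_mul, Nat.cast_one] at heuler
  have hk := Stilde_natCast n j (k + 1) l
  have hl := Stilde_natCast n j k (l + 1)
  push_cast at hk hl
  rw [succ_mul_Stilde_pred_left, succ_mul_Stilde_pred_right, hk, hl, Stilde_natCast]
  linear_combination heuler

/-- The identity `D′_{njkl} = 0` satisfied by the interaction coefficients of the
four-dimensional Schrödinger–Newton–Hooke resonant system when `n + j = k + l + 1`. -/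
theorem stmt10 (n j k l : ℕ) (h : n + j = k + l + 1) :
    ((n:ℝ) + 1) * Stilde ((n:ℤ) - 1) (j:ℤ) (k:ℤ) (l:ℤ)
      + ((j:ℝ) + 1) * Stilde (n:ℤ) ((j:ℤ) - 1) (k:ℤ) (l:ℤ)
      - ((k:ℝ) + 1) * Stilde (n:ℤ) (j:ℤ) ((k:ℤ) + 1) (l:ℤ)
      - ((l:ℝ) + 1) * Stilde (n:ℤ) (j:ℤ) (k:ℤ) ((l:ℤ) + 1) = 0 := by
  have hres : (n : ℝ) + j = k + l + 1 := mod_cast h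
  rw [stmt10_general, hres]
  ring
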